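/- Let d ≥ 2, p ≥ 1, s ∈ (0,1] with sp > 1. There exists C = C(s, p, d) such that for all M > 0, ϑ ∈ (0,1], and every Lipschitz u on the closure of ℝ^d_{M+} lying in 𝔚^{s,p}_ϑ(ℝ^d_{M+}), the Gagliardo seminorm of the trace satisfies ∫_{ℝ^{d-1}} ∫_{ℝ^{d-1}} |u(x',0) - u(y',0)|^p / |x' - y'|^{d + ps - 2} dx' dy' ≤ C ( M^{-ps} ‖u‖^p_{L^p(ℝ^d_{M+})} + ϑ^{ps-p} |u|^p_{𝔚^{s,p}_ϑ(ℝ^d_{M+})} ). -/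

import Mathlib

open MeasureTheory
open scoped ENNReal NNReal

/-- The localized nonlocal seminorm (to the `p`-th power) on the stripe
`ℝ^{d-1} × (0,M]` with horizon parameter `τ`. -/
noncomputable def stripeSemi (d : ℕ) (S : Set ℝ) (τ p s : ℝ)
    (u : EuclideanSpace ℝ (Fin (d - 1)) → ℝ → ℝ) : ℝ≥0∞ :=
  ∫⁻ x' : EuclideanSpace ℝ (Fin (d - 1)), ∫⁻ xd in S,
    ∫⁻ y' : EuclideanSpace ℝ (Fin (d - 1)),
      ∫⁻ yd in S ∩ {t : ℝ | dist y' x' ^ 2 + (t - xd) ^ 2 < (τ * xd) ^ 2},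
        ENNReal.ofReal (|u y' yd - u x' xd| ^ p / (τ * xd) ^ ((d : ℝ) + p * s))

/-- The `L^p` norm (to the `p`-th power) on the stripe `ℝ^{d-1} × (0,M]`. -/
noncomputable def stripeLp (d : ℕ) (S : Set ℝ) (p : ℝ)
    (u : EuclideanSpace ℝ (Fin (d - 1)) → ℝ → ℝ) : ℝ≥0∞ :=
  ∫⁻ x' : EuclideanSpace ℝ (Fin (d - 1)), ∫⁻ xd in S, ENNReal.ofReal (|u x' xd| ^ p)

section TraceInequality

variable {E : Type*} [NormedAddCommGroup E] [NormedSpace ℝ E] [FiniteDimensional ℝ E]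
  [MeasureSpace E] [BorelSpace E] [(volume : Measure E).IsAddHaarMeasure]

theorem lintegral_comp_smul_addHaar {F : Type*} [NormedAddCommGroup F] [NormedSpace ℝ F]
    [FiniteDimensional ℝ F] [MeasurableSpace F] [BorelSpace F] (ν : Measure F)
    [ν.IsAddHaarMeasure] (f : F → ℝ≥0∞) {r : ℝ} (hr : r ≠ 0) :
    ∫⁻ x, f (r • x) ∂ν = ENNReal.ofReal |(r ^ Module.finrank ℝ F)⁻¹| * ∫⁻ x, f x ∂ν := by
  rw [← smul_eq_mul, ← lintegral_smul_measure, ← Measure.map_addHaar_smul ν hr]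
  exact ((MeasurableEquiv.smul₀ r hr).measurableEmbedding.lintegral_map f).symm

theorem lintegral_sub_mul_self (f : ℝ → ℝ≥0∞) {c : ℝ} (hc : 0 < c) :
    ∫⁻ τ, f (c - τ * c) = ENNReal.ofReal c⁻¹ * ∫⁻ t, f t := by
  have h := lintegral_comp_smul_addHaar (volume : Measure ℝ) (fun t => f (c - t)) hc.ne'
  rw [lintegral_sub_left_eq_self (μ := (volume : Measure ℝ)) f c] at h
  simpa [mul_comm, abs_of_pos hc] using h

/-- A trace function is controlled by a single dilation step when the weight measure `κ`
contracts under dilations. -/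
theorem lintegral_trace_sub_le_dilation (κ : Measure (E × ℝ)) [SFinite κ] {u : E × ℝ → ℝ}
    (hu : Continuous u) {p q μ : ℝ} (hp : 1 ≤ p) (hμ0 : 0 < μ) (hμ1 : μ < 1) (hq0 : 0 ≤ q)
    (hq1 : q < 1)
    (hκ : ∀ f : E × ℝ → ℝ≥0∞, Measurable f →
      ∫⁻ z, f (μ • z) ∂κ ≤ ENNReal.ofReal (q ^ p) * ∫⁻ z, f z ∂κ) :
    ∫⁻ x : E, ∫⁻ z, ‖u (x, 0) - u ((x, 0) + z)‖ₑ ^ p ∂κ ≤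
      ENNReal.ofReal ((1 - q) ^ (-p)) *
        ∫⁻ x : E, ∫⁻ z, ‖u ((x, 0) + μ • z) - u ((x, 0) + z)‖ₑ ^ p ∂κ := by
  have hp0 : 0 < p := by linarith
  have hum := hu.measurable
  let F : ℕ → E × (E × ℝ) → ℝ≥0∞ := fun k a =>
    ‖u ((a.1, 0) + μ ^ k • a.2) - u ((a.1, 0) + a.2)‖ₑ
  have hF : ∀ k, Measurable (F k) := fun k => by fun_prop
  let m : Measure (E × (E × ℝ)) := volume.prod κ
  let N : (E × (E × ℝ) → ℝ≥0∞) → ℝ≥0∞ := fun f => (∫⁻ a, f a ^ p ∂m) ^ (1 / p)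
  set B : ℝ≥0∞ := ENNReal.ofReal ((1 - q)⁻¹) * N (F 1) with hB
  have hNF : ∀ k, N (F k) ≤ B := by
    intro k
    induction k with
    | zero => simp [N, F, hp0]
    | succ k ih =>
      let H : E × (E × ℝ) → ℝ≥0∞ := fun a => F k (a.1, μ • a.2)
      have hH : Measurable H := by fun_prop
      have h1 : N (F (k + 1)) ≤ N H + N (F 1) := by
        refine le_trans ?_ (ENNReal.lintegral_Lp_add_le hH.aemeasurable (hF 1).aemeasurable hp)
        simp only [N]
        gcongr with a
        simp only [F, H, Pi.add_apply, pow_one, smul_smul, ← pow_succ]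
        refine le_trans (le_of_eq ?_) (enorm_add_le _ _)
        congr 1
        ring
      have h2 : N H ≤ ENNReal.ofReal q * N (F k) := by
        have h3 : ∫⁻ a, H a ^ p ∂m ≤ ENNReal.ofReal (q ^ p) * ∫⁻ a, F k a ^ p ∂m := by
          rw [lintegral_prod _ (by fun_prop), lintegral_prod _ (by fun_prop),
            ← lintegral_const_mul _ (by fun_prop)]
          exact lintegral_mono fun x => hκ (fun z => F k (x, z) ^ p) (by fun_prop)
        simp only [N]
        refine (ENNReal.rpow_le_rpow h3 (by positivity)).trans (le_of_eq ?_)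
        rw [ENNReal.mul_rpow_of_nonneg _ _ (by positivity),
          ENNReal.ofReal_rpow_of_nonneg (by positivity) (by positivity), ← Real.rpow_mul hq0,
          mul_one_div_cancel hp0.ne', Real.rpow_one]
      calc N (F (k + 1)) ≤ ENNReal.ofReal q * B + N (F 1) := by
            refine h1.trans ?_
            gcongr
            exact h2.trans (by gcongr)
        _ = B := by
            have h5 : ENNReal.ofReal q * ENNReal.ofReal ((1 - q)⁻¹) + 1
                = ENNReal.ofReal ((1 - q)⁻¹) := by
              rw [← ENNReal.ofReal_mul hq0, ← ENNReal.ofReal_one,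
                ← ENNReal.ofReal_add (by have : 0 < 1 - q := by linarith
                                         positivity) one_pos.le]
              congr 1
              have : 1 - q ≠ 0 := by linarith
              field_simp
              ring
            calc _ = (ENNReal.ofReal q * ENNReal.ofReal ((1 - q)⁻¹) + 1) * N (F 1) := by
                  rw [hB]; ring
              _ = _ := by rw [h5]
  have hFp : ∀ k, ∫⁻ a, F k a ^ p ∂m ≤ B ^ p := by
    intro k
    have h := ENNReal.rpow_le_rpow (hNF k) hp0.le
    simp only [N] at h
    rwa [← ENNReal.rpow_mul, one_div_mul_cancel hp0.ne', ENNReal.rpow_one] at h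
  have hBp : B ^ p = ENNReal.ofReal ((1 - q) ^ (-p)) *
      ∫⁻ x : E, ∫⁻ z, ‖u ((x, 0) + μ • z) - u ((x, 0) + z)‖ₑ ^ p ∂κ := by
    rw [hB, ENNReal.mul_rpow_of_nonneg _ _ hp0.le,
      ENNReal.ofReal_rpow_of_nonneg (inv_nonneg.2 (by linarith)) hp0.le,
      Real.inv_rpow (by linarith), ← Real.rpow_neg (by linarith)]
    simp only [N]
    rw [← ENNReal.rpow_mul, one_div_mul_cancel hp0.ne', ENNReal.rpow_one,
      lintegral_prod _ (by fun_prop)]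
    simp [F]
  rw [← hBp]
  have hlim : ∀ a : E × (E × ℝ), Filter.Tendsto (fun k => F k a ^ p) Filter.atTop
      (nhds (‖u (a.1, 0) - u ((a.1, 0) + a.2)‖ₑ ^ p)) := by
    intro a
    have h0 : Filter.Tendsto (fun k : ℕ => μ ^ k) Filter.atTop (nhds 0) :=
      tendsto_pow_atTop_nhds_zero_of_lt_one hμ0.le hμ1
    have hc : Continuous fun r : ℝ => ‖u ((a.1, 0) + r • a.2) - u ((a.1, 0) + a.2)‖ₑ ^ p :=
      (ENNReal.continuous_rpow_const).comp (by fun_prop)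
    have h := (hc.tendsto 0).comp h0
    simp only [zero_smul, add_zero] at h
    exact h
  calc _ = ∫⁻ a, ‖u (a.1, 0) - u ((a.1, 0) + a.2)‖ₑ ^ p ∂m := by
        rw [lintegral_prod _ (by fun_prop)]
    _ = ∫⁻ a, Filter.liminf (fun k => F k a ^ p) Filter.atTop ∂m :=
        lintegral_congr fun a => (hlim a).liminf_eq.symm
    _ ≤ Filter.liminf (fun k => ∫⁻ a, F k a ^ p ∂m) Filter.atTop :=
        lintegral_liminf_le fun k => by fun_prop
    _ ≤ B ^ p := by
        refine Filter.liminf_le_of_le (by isBoundedDefault) fun b hb => ?_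
        obtain ⟨k, hk⟩ := hb.exists
        exact hk.trans (hFp k)

/-- The weight `ζ ^ (-β)` on the truncated cone `‖w‖ < 2 ζ`, `0 < ζ ≤ M`. -/
noncomputable def coneDensity (F : Type*) [NormedAddCommGroup F] (β M : ℝ) (z : F × ℝ) : ℝ≥0∞ :=
  if 0 < z.2 ∧ z.2 ≤ M ∧ ‖z.1‖ < 2 * z.2 then ENNReal.ofReal (z.2 ^ (-β)) else 0

/-- The measure with density `coneDensity`. -/
noncomputable def coneMeasure (F : Type*) [NormedAddCommGroup F] [MeasureSpace F] (β M : ℝ) :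
    Measure (F × ℝ) :=
  volume.withDensity (coneDensity F β M)

@[fun_prop]
theorem measurable_coneDensity {F : Type*} [NormedAddCommGroup F] [MeasurableSpace F]
    [OpensMeasurableSpace F] (β M : ℝ) : Measurable (coneDensity F β M) := by
  unfold coneDensity
  refine Measurable.ite ?_ (by fun_prop) measurable_const
  exact (measurableSet_lt measurable_const measurable_snd).inter
    ((measurableSet_le measurable_snd measurable_const).inter
      (measurableSet_lt measurable_fst.norm (by fun_prop)))

theorem lintegral_coneMeasure {F : Type*} [NormedAddCommGroup F] [MeasureSpace F]
    [OpensMeasurableSpace F] (β M : ℝ) (f : F × ℝ → ℝ≥0∞) :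
    ∫⁻ z, f z ∂coneMeasure F β M = ∫⁻ z, coneDensity F β M z * f z := by
  refine lintegral_withDensity_eq_lintegral_mul_non_measurable _ (measurable_coneDensity β M)
    (Filter.Eventually.of_forall fun z => ?_) f
  unfold coneDensity
  split_ifs <;> simp

theorem lintegral_comp_smul_coneMeasure_le (β M : ℝ) (f : E × ℝ → ℝ≥0∞) {μ : ℝ}
    (hμ0 : 0 < μ) (hμ1 : μ < 1) :
    ∫⁻ z, f (μ • z) ∂coneMeasure E β M ≤
      ENNReal.ofReal (μ ^ (β - Module.finrank ℝ E - 1)) * ∫⁻ z, f z ∂coneMeasure E β M := by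
  have : (volume : Measure (E × ℝ)).IsAddHaarMeasure := Measure.prod.instIsAddHaarMeasure _ _
  rw [lintegral_coneMeasure, lintegral_coneMeasure]
  have h := lintegral_comp_smul_addHaar (volume : Measure (E × ℝ))
    (fun z => coneDensity E β M z * f z) hμ0.ne'
  have hk : ∀ z, coneDensity E β M z ≤ ENNReal.ofReal (μ ^ β) * coneDensity E β M (μ • z) := by
    intro z
    unfold coneDensity
    split_ifs with h1 h2
    · obtain ⟨h1, -, -⟩ := h1
      rw [← ENNReal.ofReal_mul (by positivity)]
      refine le_of_eq (congrArg _ ?_)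
      rw [Prod.smul_snd, smul_eq_mul, Real.mul_rpow hμ0.le h1.le, ← mul_assoc,
        ← Real.rpow_add hμ0]
      simp
    · refine absurd ?_ h2
      obtain ⟨h1, h1M, h1w⟩ := h1
      simp only [Prod.smul_snd, Prod.smul_fst, smul_eq_mul, norm_smul, Real.norm_eq_abs,
        abs_of_pos hμ0]
      refine ⟨by positivity, ?_, by nlinarith⟩
      nlinarith
    · simp
    · simp
  calc _ ≤ ∫⁻ z, ENNReal.ofReal (μ ^ β) * (coneDensity E β M (μ • z) * f (μ • z)) :=
        lintegral_mono fun z => by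
          rw [← mul_assoc]
          exact mul_le_mul_left (hk z) _
    _ = _ := by
        rw [lintegral_const_mul' _ _ ENNReal.ofReal_ne_top, h, ← mul_assoc,
          ← ENNReal.ofReal_mul (by positivity)]
        congr 2
        rw [abs_of_pos (by positivity), Module.finrank_prod, Module.finrank_self,
          ← Real.rpow_natCast, ← Real.rpow_neg hμ0.le, ← Real.rpow_add hμ0]
        congr 1
        push_cast
        ring

theorem one_sub_rpow_rpow_neg_le {b p τ : ℝ} (hb0 : 0 < b) (hb1 : b ≤ 1) (hp : 0 < p)
    (hτ0 : 0 < τ) (hτ1 : τ < 1) :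
    (1 - τ) ^ b < 1 ∧ (1 - (1 - τ) ^ b) ^ (-p) ≤ (b * τ) ^ (-p) := by
  have h : (1 - τ) ^ b ≤ 1 - b * τ := by
    have := rpow_one_add_le_one_add_mul_self (s := -τ) (by linarith) hb0.le hb1
    simpa [sub_eq_add_neg] using this
  have hbτ : 0 < b * τ := by positivity
  exact ⟨by linarith, Real.rpow_le_rpow_of_nonpos hbτ (by linarith) (by linarith)⟩

theorem lintegral_trace_sub_coneMeasure_le_dilation {u : E × ℝ → ℝ} (hu : Continuous u)
    {p s M τ : ℝ} (hp : 1 ≤ p) (hs1 : s ≤ 1) (hsp : 1 < s * p) (hτ0 : 0 < τ) (hτ1 : τ < 1) :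
    ∫⁻ x : E, ∫⁻ z, ‖u (x, 0) - u ((x, 0) + z)‖ₑ ^ p ∂coneMeasure E (Module.finrank ℝ E + p * s) M
      ≤ ENNReal.ofReal (((s - 1 / p) * τ) ^ (-p)) *
        ∫⁻ x : E, ∫⁻ z, ‖u ((x, 0) + (1 - τ) • z) - u ((x, 0) + z)‖ₑ ^ p
          ∂coneMeasure E (Module.finrank ℝ E + p * s) M := by
  have hp0 : 0 < p := by linarith
  have hb0 : 0 < s - 1 / p := by
    rw [sub_pos, div_lt_iff₀ hp0]; exact hsp
  have hb1 : s - 1 / p ≤ 1 := by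
    have : 0 < 1 / p := by positivity
    linarith
  obtain ⟨h1, h2⟩ := one_sub_rpow_rpow_neg_le hb0 hb1 hp0 hτ0 hτ1
  have : SFinite (coneMeasure E (Module.finrank ℝ E + p * s) M) := by
    unfold coneMeasure; infer_instance
  refine (lintegral_trace_sub_le_dilation (coneMeasure E (Module.finrank ℝ E + p * s) M) hu hp
    (sub_pos.2 hτ1) (by linarith) (q := (1 - τ) ^ (s - 1 / p)) (by positivity) h1
    fun f hf => ?_).trans ?_
  · refine (lintegral_comp_smul_coneMeasure_le _ M f (sub_pos.2 hτ1) (by linarith)).trans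
      (le_of_eq ?_)
    rw [← Real.rpow_mul (by linarith)]
    congr 3
    field_simp
    ring
  · gcongr

/-- The localized kernel obtained from the weight `coneDensity` after rescaling horizontally. -/
noncomputable def localKernel {F : Type*} [NormedAddCommGroup F] (u : F × ℝ → ℝ) (p β M a : ℝ)
    (x : F) (ζ : ℝ) (v : F) (t : ℝ) : ℝ≥0∞ :=
  if 0 < ζ ∧ ζ ≤ M ∧ ‖v‖ < 4 * a * ζ then
    ENNReal.ofReal (ζ ^ (-β)) * ‖u (x + v, t) - u (x, ζ)‖ₑ ^ p else 0

theorem measurable_localKernel {u : E × ℝ → ℝ} (hu : Measurable u) (p β M a : ℝ) :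
    Measurable fun y : E × ℝ × E × ℝ => localKernel u p β M a y.1 y.2.1 y.2.2.1 y.2.2.2 := by
  unfold localKernel
  refine Measurable.ite ?_ (by fun_prop) measurable_const
  have h1 : MeasurableSet {y : E × ℝ × E × ℝ | 0 < y.2.1} :=
    measurableSet_lt (by fun_prop) (by fun_prop)
  have h2 : MeasurableSet {y : E × ℝ × E × ℝ | y.2.1 ≤ M} :=
    measurableSet_le (by fun_prop) (by fun_prop)
  have h3 : MeasurableSet {y : E × ℝ × E × ℝ | ‖y.2.2.1‖ < 4 * a * y.2.1} :=
    measurableSet_lt (by fun_prop) (by fun_prop)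
  exact h1.inter (h2.inter h3)

theorem lintegral_dilation_le_localKernel {u : E × ℝ → ℝ} (hu : Measurable u) {p β M a τ : ℝ}
    (ha : 0 < a) (haτ : a < τ) (hτa : τ < 2 * a) :
    ∫⁻ x : E, ∫⁻ z, ‖u ((x, 0) + (1 - τ) • z) - u ((x, 0) + z)‖ₑ ^ p ∂coneMeasure E β M ≤
      ENNReal.ofReal ((a ^ Module.finrank ℝ E)⁻¹) *
        ∫⁻ x : E, ∫⁻ ζ : ℝ, ∫⁻ v : E, localKernel u p β M a x ζ v (ζ - τ * ζ) := by
  have hτ0 : 0 < τ := ha.trans haτ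
  have hk := measurable_coneDensity (F := E) β M
  let f : E → ℝ → E → ℝ≥0∞ := fun x ζ w =>
    coneDensity E β M (w, ζ) * ‖u (x - τ • w, ζ - τ * ζ) - u (x, ζ)‖ₑ ^ p
  have hf : Measurable fun y : E × ℝ × E => f y.1 y.2.1 y.2.2 := by fun_prop
  have hL := measurable_localKernel hu p β M a
  calc _ = ∫⁻ x : E, ∫⁻ ζ : ℝ, ∫⁻ w : E, f (x + w) ζ w := by
        refine lintegral_congr fun x => ?_
        rw [lintegral_coneMeasure, Measure.volume_eq_prod, lintegral_prod_symm _ (by fun_prop)]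
        refine lintegral_congr fun ζ => lintegral_congr fun w => ?_
        have h : ((x, 0) : E × ℝ) + (1 - τ) • (w, ζ) = (x + w - τ • w, ζ - τ * ζ) := by
          ext
          · simp only [Prod.fst_add, Prod.smul_fst]
            module
          · simp only [Prod.snd_add, Prod.smul_snd, smul_eq_mul]
            ring
        simp only [f, h, Prod.mk_add_mk, zero_add]
    _ = ∫⁻ ζ : ℝ, ∫⁻ w : E, ∫⁻ x : E, f (x + w) ζ w := by
        rw [lintegral_lintegral_swap (by fun_prop)]
        exact lintegral_congr fun ζ => lintegral_lintegral_swap (by fun_prop)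
    _ = ∫⁻ ζ : ℝ, ∫⁻ w : E, ∫⁻ x : E, f x ζ w :=
        lintegral_congr fun ζ => lintegral_congr fun w =>
          lintegral_add_right_eq_self (fun x => f x ζ w) w
    _ = ∫⁻ x : E, ∫⁻ ζ : ℝ, ∫⁻ w : E, f x ζ w := by
        rw [lintegral_lintegral_swap (μ := (volume : Measure E)) (by fun_prop)]
        exact lintegral_congr fun ζ => lintegral_lintegral_swap (by fun_prop)
    _ ≤ ∫⁻ x : E, ∫⁻ ζ : ℝ, ENNReal.ofReal ((a ^ Module.finrank ℝ E)⁻¹) *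
          ∫⁻ v : E, localKernel u p β M a x ζ v (ζ - τ * ζ) := by
        refine lintegral_mono fun x => lintegral_mono fun ζ => ?_
        calc _ ≤ ∫⁻ w : E, localKernel u p β M a x ζ ((-τ) • w) (ζ - τ * ζ) := by
              refine lintegral_mono fun w => ?_
              simp only [f, coneDensity, localKernel]
              split_ifs with h1 h2
              · rw [neg_smul, ← sub_eq_add_neg]
              · refine absurd ⟨h1.1, h1.2.1, ?_⟩ h2
                rw [norm_smul, Real.norm_eq_abs, abs_neg, abs_of_pos hτ0]
                nlinarith [norm_nonneg w, h1.1, h1.2.2]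
              · simp
              · simp
          _ ≤ _ := by
              rw [lintegral_comp_smul_addHaar (volume : Measure E)
                (fun v => localKernel u p β M a x ζ v (ζ - τ * ζ)) (neg_ne_zero.2 hτ0.ne')]
              gcongr
              rw [abs_inv, abs_pow, abs_neg, abs_of_pos hτ0]
              gcongr
    _ = _ := by
        simp_rw [lintegral_const_mul' _ _ ENNReal.ofReal_ne_top]

/-- The localized nonlocal seminorm on the stripe `E × (0, M]`, with kernel exponent `γ`. -/
noncomputable def nonlocalSemi {F : Type*} [NormedAddCommGroup F] [MeasureSpace F]
    (u : F × ℝ → ℝ) (p γ M ϑ : ℝ) : ℝ≥0∞ :=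
  ∫⁻ x : F, ∫⁻ ζ in Set.Ioc 0 M, ∫⁻ y : F,
    ∫⁻ t in Set.Ioc 0 M ∩ {t : ℝ | dist y x ^ 2 + (t - ζ) ^ 2 < (ϑ * ζ) ^ 2},
      ENNReal.ofReal (|u (y, t) - u (x, ζ)| ^ p / (ϑ * ζ) ^ γ)

theorem ofReal_abs_rpow_eq_enorm_rpow (r : ℝ) {p : ℝ} (hp : 0 ≤ p) :
    ENNReal.ofReal (|r| ^ p) = ‖r‖ₑ ^ p := by
  rw [← ENNReal.ofReal_rpow_of_nonneg (abs_nonneg r) hp, Real.enorm_eq_ofReal_abs]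

theorem measurableSet_ball_section {F : Type*} [NormedAddCommGroup F] (M ϑ ζ : ℝ) (x y : F) :
    MeasurableSet (Set.Ioc 0 M ∩ {t : ℝ | dist y x ^ 2 + (t - ζ) ^ 2 < (ϑ * ζ) ^ 2}) :=
  measurableSet_Ioc.inter (measurableSet_lt (by fun_prop) (by fun_prop))

theorem lintegral_localKernel_le {F : Type*} [NormedAddCommGroup F] (u : F × ℝ → ℝ)
    {p β M ϑ ζ : ℝ} (hp : 0 ≤ p) (hϑ0 : 0 < ϑ) (hϑ1 : ϑ ≤ 1) (hζ : ζ ∈ Set.Ioc 0 M) (x v : F) :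
    ∫⁻ τ in Set.Ioo (ϑ / 5) (2 * (ϑ / 5)), localKernel u p β M (ϑ / 5) x ζ v (ζ - τ * ζ) ≤
      ENNReal.ofReal (ϑ ^ (β + 1)) *
        ∫⁻ t in Set.Ioc 0 M ∩ {t : ℝ | dist (x + v) x ^ 2 + (t - ζ) ^ 2 < (ϑ * ζ) ^ 2},
          ENNReal.ofReal (|u (x + v, t) - u (x, ζ)| ^ p / (ϑ * ζ) ^ (β + 1)) := by
  have hζ0 : 0 < ζ := hζ.1
  set A := Set.Ioc 0 M ∩ {t : ℝ | dist (x + v) x ^ 2 + (t - ζ) ^ 2 < (ϑ * ζ) ^ 2}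
  set I := Set.Ioo (ζ - 2 * (ϑ / 5) * ζ) (ζ - ϑ / 5 * ζ) with hI
  let g : ℝ → ℝ≥0∞ := I.indicator (localKernel u p β M (ϑ / 5) x ζ v)
  calc _ ≤ ∫⁻ τ, g (ζ - τ * ζ) := by
        rw [← lintegral_indicator measurableSet_Ioo]
        refine lintegral_mono fun τ => ?_
        by_cases hτ : τ ∈ Set.Ioo (ϑ / 5) (2 * (ϑ / 5))
        · have hI : ζ - τ * ζ ∈ I := ⟨by nlinarith [hτ.2], by nlinarith [hτ.1]⟩
          simp only [g]
          rw [Set.indicator_of_mem hI, Set.indicator_of_mem hτ]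
        · rw [Set.indicator_of_notMem hτ]
          exact zero_le
    _ = ∫⁻ t, ENNReal.ofReal ζ⁻¹ * g t := by
        rw [lintegral_sub_mul_self g hζ0, lintegral_const_mul' _ _ ENNReal.ofReal_ne_top]
    _ ≤ ∫⁻ t in A, ENNReal.ofReal (ϑ ^ (β + 1)) *
          ENNReal.ofReal (|u (x + v, t) - u (x, ζ)| ^ p / (ϑ * ζ) ^ (β + 1)) := by
        rw [← lintegral_indicator (measurableSet_ball_section M ϑ ζ x (x + v))]
        refine lintegral_mono fun t => ?_
        simp only [g]
        by_cases ht : t ∈ I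
        · rw [Set.indicator_of_mem ht]
          unfold localKernel
          split_ifs with h
          · obtain ⟨ht1, ht2⟩ := ht
            have htA : t ∈ A := by
              refine ⟨⟨by nlinarith, by nlinarith [hζ.2]⟩, ?_⟩
              have h1 : ‖v‖ ^ 2 ≤ (4 * (ϑ / 5) * ζ) ^ 2 :=
                pow_le_pow_left₀ (norm_nonneg v) h.2.2.le 2
              have h2 : (t - ζ) ^ 2 < (2 * (ϑ / 5) * ζ) ^ 2 := by
                refine sq_lt_sq' (by nlinarith) ?_
                nlinarith [mul_pos hϑ0 hζ0]
              simp only [Set.mem_ofPred_eq, dist_self_add_left]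
              nlinarith [sq_nonneg (ϑ * ζ)]
            rw [Set.indicator_of_mem htA, ← ofReal_abs_rpow_eq_enorm_rpow _ hp,
              ← ENNReal.ofReal_mul (by positivity), ← ENNReal.ofReal_mul (by positivity),
              ← ENNReal.ofReal_mul (by positivity)]
            refine le_of_eq (congrArg _ ?_)
            rw [Real.mul_rpow hϑ0.le hζ0.le, Real.rpow_add_one hζ0.ne', Real.rpow_neg hζ0.le]
            have := (Real.rpow_pos_of_pos hϑ0 (β + 1)).ne'
            have := (Real.rpow_pos_of_pos hζ0 β).ne'
            field_simp
          · simp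
        · simp [Set.indicator_of_notMem ht]
    _ = _ := lintegral_const_mul' _ _ ENNReal.ofReal_ne_top

theorem lintegral_Ioo_localKernel_le_nonlocalSemi {u : E × ℝ → ℝ} (hu : Measurable u)
    {p β M ϑ : ℝ} (hp : 0 ≤ p) (hϑ0 : 0 < ϑ) (hϑ1 : ϑ ≤ 1) :
    ∫⁻ τ in Set.Ioo (ϑ / 5) (2 * (ϑ / 5)), ∫⁻ x : E, ∫⁻ ζ : ℝ, ∫⁻ v : E,
        localKernel u p β M (ϑ / 5) x ζ v (ζ - τ * ζ) ≤
      ENNReal.ofReal (ϑ ^ (β + 1)) * nonlocalSemi u p (β + 1) M ϑ := by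
  have hL := measurable_localKernel hu p β M (ϑ / 5)
  have hL' : Measurable fun y : ℝ × E × ℝ × E =>
      localKernel u p β M (ϑ / 5) y.2.1 y.2.2.1 y.2.2.2 (y.2.2.1 - y.1 * y.2.2.1) :=
    hL.comp (by fun_prop :
      Measurable fun y : ℝ × E × ℝ × E => (y.2.1, y.2.2.1, y.2.2.2, y.2.2.1 - y.1 * y.2.2.1))
  calc _ = ∫⁻ x : E, ∫⁻ ζ : ℝ, ∫⁻ v : E, ∫⁻ τ in Set.Ioo (ϑ / 5) (2 * (ϑ / 5)),
        localKernel u p β M (ϑ / 5) x ζ v (ζ - τ * ζ) := by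
        rw [lintegral_lintegral_swap (by fun_prop)]
        refine lintegral_congr fun x => ?_
        rw [lintegral_lintegral_swap (by fun_prop)]
        refine lintegral_congr fun ζ => ?_
        rw [lintegral_lintegral_swap (by fun_prop)]
    _ ≤ ∫⁻ x : E, ∫⁻ ζ in Set.Ioc 0 M, ENNReal.ofReal (ϑ ^ (β + 1)) * ∫⁻ y : E,
          ∫⁻ t in Set.Ioc 0 M ∩ {t : ℝ | dist y x ^ 2 + (t - ζ) ^ 2 < (ϑ * ζ) ^ 2},
            ENNReal.ofReal (|u (y, t) - u (x, ζ)| ^ p / (ϑ * ζ) ^ (β + 1)) := by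
        refine lintegral_mono fun x => ?_
        rw [← lintegral_indicator measurableSet_Ioc]
        refine lintegral_mono fun ζ => ?_
        by_cases hζ : ζ ∈ Set.Ioc 0 M
        · rw [Set.indicator_of_mem hζ, ← lintegral_add_left_eq_self (fun y : E =>
              ∫⁻ t in Set.Ioc 0 M ∩ {t : ℝ | dist y x ^ 2 + (t - ζ) ^ 2 < (ϑ * ζ) ^ 2},
                ENNReal.ofReal (|u (y, t) - u (x, ζ)| ^ p / (ϑ * ζ) ^ (β + 1))) x,
            ← lintegral_const_mul' _ _ ENNReal.ofReal_ne_top]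
          exact lintegral_mono fun v => lintegral_localKernel_le u hp hϑ0 hϑ1 hζ x v
        · rw [Set.indicator_of_notMem hζ]
          simp only [localKernel]
          have : ∀ v : E, ¬ (0 < ζ ∧ ζ ≤ M ∧ ‖v‖ < 4 * (ϑ / 5) * ζ) :=
            fun v h => hζ ⟨h.1, h.2.1⟩
          simp [this]
    _ = _ := by
        simp_rw [lintegral_const_mul' _ _ ENNReal.ofReal_ne_top]
        rfl

/-- The weighted trace difference is bounded by the localized nonlocal seminorm. -/
theorem lintegral_trace_sub_coneMeasure_le_nonlocalSemi {u : E × ℝ → ℝ} (hu : Continuous u)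
    {p s M ϑ : ℝ} (hp : 1 ≤ p) (hs1 : s ≤ 1) (hsp : 1 < s * p) (hϑ0 : 0 < ϑ) (hϑ1 : ϑ ≤ 1) :
    ∫⁻ x : E, ∫⁻ z, ‖u (x, 0) - u ((x, 0) + z)‖ₑ ^ p
        ∂coneMeasure E (Module.finrank ℝ E + p * s) M ≤
      ENNReal.ofReal (5 ^ (1 + p + Module.finrank ℝ E) * (s - 1 / p) ^ (-p)) *
        (ENNReal.ofReal (ϑ ^ (p * s - p)) *
          nonlocalSemi u p (Module.finrank ℝ E + p * s + 1) M ϑ) := by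
  have hp0 : 0 < p := by linarith
  have hb0 : 0 < s - 1 / p := by
    rw [sub_pos, div_lt_iff₀ hp0]; exact hsp
  set b := s - 1 / p
  set n := Module.finrank ℝ E
  set β : ℝ := n + p * s with hβ
  set a := ϑ / 5 with ha
  have ha0 : 0 < a := by positivity
  set J := ∫⁻ x : E, ∫⁻ z, ‖u (x, 0) - u ((x, 0) + z)‖ₑ ^ p ∂coneMeasure E β M with hJ
  set c := ENNReal.ofReal ((b * a) ^ (-p)) * ENNReal.ofReal ((a ^ n)⁻¹) with hc
  have h1 : ∀ τ ∈ Set.Ioo a (2 * a), J ≤ c * ∫⁻ x : E, ∫⁻ ζ : ℝ, ∫⁻ v : E,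
      localKernel u p β M a x ζ v (ζ - τ * ζ) := by
    intro τ hτ
    have hτ0 := ha0.trans hτ.1
    have hτ1 : τ < 1 := by linarith [hτ.2]
    refine (lintegral_trace_sub_coneMeasure_le_dilation hu hp hs1 hsp hτ0 hτ1).trans ?_
    rw [hc, mul_assoc]
    refine mul_le_mul' (ENNReal.ofReal_le_ofReal ?_)
      (lintegral_dilation_le_localKernel hu.measurable ha0 hτ.1 hτ.2)
    exact Real.rpow_le_rpow_of_nonpos (by positivity) (by gcongr; exact hτ.1.le) (by linarith)
  have h2 : J * ENNReal.ofReal a ≤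
      c * (ENNReal.ofReal (ϑ ^ (β + 1)) * nonlocalSemi u p (β + 1) M ϑ) := by
    calc J * ENNReal.ofReal a = ∫⁻ τ in Set.Ioo a (2 * a), J := by
          rw [setLIntegral_const, Real.volume_Ioo]
          congr 2
          ring
      _ ≤ ∫⁻ τ in Set.Ioo a (2 * a), c * ∫⁻ x : E, ∫⁻ ζ : ℝ, ∫⁻ v : E,
            localKernel u p β M a x ζ v (ζ - τ * ζ) := setLIntegral_mono' measurableSet_Ioo h1
      _ ≤ _ := by
          rw [lintegral_const_mul' _ _ (by finiteness)]
          gcongr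
          exact lintegral_Ioo_localKernel_le_nonlocalSemi hu.measurable hp0.le hϑ0 hϑ1
  have h3 : ENNReal.ofReal a * ENNReal.ofReal a⁻¹ = 1 := by
    rw [← ENNReal.ofReal_mul ha0.le, mul_inv_cancel₀ ha0.ne', ENNReal.ofReal_one]
  calc J = J * ENNReal.ofReal a * ENNReal.ofReal a⁻¹ := by rw [mul_assoc, h3, mul_one]
    _ ≤ c * (ENNReal.ofReal (ϑ ^ (β + 1)) * nonlocalSemi u p (β + 1) M ϑ) *
          ENNReal.ofReal a⁻¹ := by gcongr
    _ = (c * ENNReal.ofReal (ϑ ^ (β + 1)) * ENNReal.ofReal a⁻¹) *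
          nonlocalSemi u p (β + 1) M ϑ := by ring
    _ = _ := by
      rw [← mul_assoc]
      congr 1
      rw [hc, ← ENNReal.ofReal_mul (by positivity), ← ENNReal.ofReal_mul (by positivity),
        ← ENNReal.ofReal_mul (by positivity), ← ENNReal.ofReal_mul (by positivity)]
      congr 1
      have hϑβ : ϑ ^ (p * s - p) = ϑ ^ (-p) * (ϑ ^ (n : ℝ))⁻¹ * ϑ ^ (β + 1) * ϑ⁻¹ := by
        rw [← Real.rpow_neg hϑ0.le, ← Real.rpow_neg_one, ← Real.rpow_add hϑ0,
          ← Real.rpow_add hϑ0, ← Real.rpow_add hϑ0]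
        congr 1
        rw [hβ]
        ring
      rw [hϑβ, ← Real.rpow_natCast, ha, Real.mul_rpow hb0.le (by positivity),
        Real.div_rpow hϑ0.le (by norm_num), Real.div_rpow hϑ0.le (by norm_num),
        Real.rpow_neg (by norm_num : (0 : ℝ) ≤ 5), Real.rpow_add (by norm_num : (0 : ℝ) < 5),
        Real.rpow_add (by norm_num : (0 : ℝ) < 5), Real.rpow_one]
      generalize ϑ ^ (β + 1) = y
      have := (Real.rpow_pos_of_pos hϑ0 (n : ℝ)).ne'
      have : (5 : ℝ) ^ (n : ℝ) ≠ 0 := by positivity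
      field_simp

/-- The weight used to average a trace difference over points above the segment from `x` to `y`. -/
noncomputable def pairWeight {F : Type*} [NormedAddCommGroup F] (β M : ℝ) (x y : F) (z : F × ℝ) :
    ℝ≥0∞ :=
  coneDensity F β M (z - (x, 0)) * if dist x y < z.2 then 1 else 0

theorem measurable_pairWeight (β M : ℝ) :
    Measurable fun a : E × E × (E × ℝ) => pairWeight β M a.1 a.2.1 a.2.2 := by
  unfold pairWeight
  refine Measurable.mul (by fun_prop) (Measurable.ite ?_ measurable_const measurable_const)
  exact measurableSet_lt (f := fun a : E × E × (E × ℝ) => dist a.1 a.2.1) (by fun_prop)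
    (by fun_prop)

theorem volume_ball_eq_ofReal (x : E) {r : ℝ} (hr : 0 < r) :
    volume (Metric.ball x r) =
      ENNReal.ofReal (r ^ Module.finrank ℝ E * (volume (Metric.ball (0 : E) 1)).toReal) := by
  rw [Measure.addHaar_ball_of_pos _ _ hr, ENNReal.ofReal_mul (by positivity),
    ENNReal.ofReal_toReal measure_ball_lt_top.ne]

theorem volume_ball_toReal_pos : 0 < (volume (Metric.ball (0 : E) 1)).toReal :=
  ENNReal.toReal_pos (Metric.measure_ball_pos _ _ one_pos).ne' measure_ball_lt_top.ne

theorem enorm_rpow_le_two_rpow_mul {a b c : ℝ} {p : ℝ} (hp : 1 ≤ p) (h : a = b + c) :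
    ‖a‖ₑ ^ p ≤ ENNReal.ofReal (2 ^ (p - 1)) * (‖b‖ₑ ^ p + ‖c‖ₑ ^ p) := by
  have h2 : ENNReal.ofReal (2 ^ (p - 1)) = 2 ^ (p - 1) := by
    rw [← ENNReal.ofReal_rpow_of_pos two_pos]
    simp
  rw [h, h2]
  exact (ENNReal.rpow_le_rpow (enorm_add_le b c) (by linarith)).trans
    (ENNReal.rpow_add_le_mul_rpow_add_rpow _ _ hp)

theorem enorm_trace_sub_rpow_le_pairWeight {u : E × ℝ → ℝ} (hu : Measurable u) {p β M : ℝ}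
    (hp : 1 ≤ p) (hβ : 0 ≤ β + Module.finrank ℝ E) {x y : E} (hxy : 0 < dist x y)
    (hM : dist x y < M / 2) :
    ENNReal.ofReal (dist x y ^ (-(β - 1))) * ‖u (x, 0) - u (y, 0)‖ₑ ^ p ≤
      ENNReal.ofReal (2 ^ (p - 1 + β + Module.finrank ℝ E) *
          (volume (Metric.ball (0 : E) 1)).toReal⁻¹) *
        ∫⁻ z, (pairWeight (β + Module.finrank ℝ E) M x y z * ‖u (x, 0) - u z‖ₑ ^ p +
          pairWeight (β + Module.finrank ℝ E) M y x z * ‖u (y, 0) - u z‖ₑ ^ p) := by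
  set r := dist x y with hr
  set n := Module.finrank ℝ E
  set ω := (volume (Metric.ball (0 : E) 1)).toReal
  have hω0 : 0 < ω := volume_ball_toReal_pos
  set W := fun z => pairWeight (β + n) M x y z * ‖u (x, 0) - u z‖ₑ ^ p +
    pairWeight (β + n) M y x z * ‖u (y, 0) - u z‖ₑ ^ p with hW
  set S : Set (E × ℝ) := Metric.ball x r ×ˢ Set.Ioo r (2 * r) with hS
  have hSm : MeasurableSet S := Metric.isOpen_ball.measurableSet.prod measurableSet_Ioo
  have hvol : volume S = ENNReal.ofReal (ω * r ^ (n + 1)) := by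
    rw [hS, Measure.volume_eq_prod, Measure.prod_prod, volume_ball_eq_ofReal x hxy,
      Real.volume_Ioo, ← ENNReal.ofReal_mul (by positivity)]
    congr 1
    ring
  have hcone : ∀ z ∈ S, ∀ w : E, dist z.1 w < 2 * r →
      ENNReal.ofReal ((2 * r) ^ (-(β + n))) ≤ coneDensity E (β + n) M (z - (w, 0)) := by
    intro z hz w hw
    have h1 : r < z.2 := hz.2.1
    have h2 : z.2 < 2 * r := hz.2.2
    unfold coneDensity
    rw [if_pos]
    · apply ENNReal.ofReal_le_ofReal
      simp only [Prod.snd_sub, sub_zero]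
      exact Real.rpow_le_rpow_of_nonpos (by linarith) h2.le (by linarith)
    · simp only [Prod.snd_sub, sub_zero, Prod.fst_sub, ← dist_eq_norm]
      exact ⟨by linarith, by linarith, by linarith⟩
  have hpt : ∀ z ∈ S, ENNReal.ofReal ((2 * r) ^ (-(β + n))) * ‖u (x, 0) - u (y, 0)‖ₑ ^ p ≤
      ENNReal.ofReal (2 ^ (p - 1)) * W z := by
    intro z hz
    have hzx : dist z.1 x < r := hz.1
    have h1 : r < z.2 := hz.2.1
    have hzy : dist z.1 y < 2 * r := by linarith [dist_triangle z.1 x y]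
    have hx := hcone z hz x (by linarith)
    have hy := hcone z hz y hzy
    have h2 := enorm_rpow_le_two_rpow_mul hp
      (show u (x, 0) - u (y, 0) = (u (x, 0) - u z) + -(u (y, 0) - u z) by ring)
    rw [enorm_neg] at h2
    simp only [hW, pairWeight, dist_comm y x, ← hr, if_pos h1, mul_one]
    calc _ ≤ ENNReal.ofReal ((2 * r) ^ (-(β + n))) * (ENNReal.ofReal (2 ^ (p - 1)) *
          (‖u (x, 0) - u z‖ₑ ^ p + ‖u (y, 0) - u z‖ₑ ^ p)) := by gcongr
      _ = ENNReal.ofReal (2 ^ (p - 1)) *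
          (ENNReal.ofReal ((2 * r) ^ (-(β + n))) * ‖u (x, 0) - u z‖ₑ ^ p +
            ENNReal.ofReal ((2 * r) ^ (-(β + n))) * ‖u (y, 0) - u z‖ₑ ^ p) := by ring
      _ ≤ _ := by gcongr
  have hint : ENNReal.ofReal ((2 * r) ^ (-(β + n))) * ‖u (x, 0) - u (y, 0)‖ₑ ^ p *
      ENNReal.ofReal (ω * r ^ (n + 1)) ≤ ENNReal.ofReal (2 ^ (p - 1)) * ∫⁻ z, W z := by
    rw [← hvol, ← setLIntegral_const, ← lintegral_const_mul' _ _ ENNReal.ofReal_ne_top]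
    exact (setLIntegral_mono' hSm hpt).trans (setLIntegral_le_lintegral _ _)
  have hr2 : r ^ (-(β - 1)) =
      (2 ^ (β + n) * ω⁻¹) * ((2 * r) ^ (-(β + n)) * (ω * r ^ (n + 1))) := by
    rw [Real.mul_rpow two_pos.le hxy.le, Real.rpow_neg two_pos.le, ← Real.rpow_natCast r,
      show -(β - 1) = -(β + n) + ((n + 1 : ℕ) : ℝ) by push_cast; ring, Real.rpow_add hxy]
    generalize r ^ ((n + 1 : ℕ) : ℝ) = r₁
    generalize r ^ (-(β + n)) = r₂
    have : (2 : ℝ) ^ (β + n) ≠ 0 := by positivity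
    field_simp
  calc _ = ENNReal.ofReal (2 ^ (β + n) * ω⁻¹) *
        (ENNReal.ofReal ((2 * r) ^ (-(β + n))) * ‖u (x, 0) - u (y, 0)‖ₑ ^ p *
          ENNReal.ofReal (ω * r ^ (n + 1))) := by
        rw [hr2, ENNReal.ofReal_mul (p := 2 ^ (β + n) * ω⁻¹) (by positivity),
          ENNReal.ofReal_mul (p := (2 * r) ^ (-(β + n))) (by positivity)]
        ring
    _ ≤ ENNReal.ofReal (2 ^ (β + n) * ω⁻¹) * (ENNReal.ofReal (2 ^ (p - 1)) * ∫⁻ z, W z) := by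
        gcongr
    _ = _ := by
        rw [← mul_assoc, ← ENNReal.ofReal_mul (by positivity), add_assoc,
          Real.rpow_add two_pos (p - 1)]
        congr 2
        ring

theorem lintegral_pairWeight (β M : ℝ) (x : E) (z : E × ℝ) :
    ∫⁻ y, pairWeight (β + Module.finrank ℝ E) M x y z =
      volume (Metric.ball (0 : E) 1) * coneDensity E β M (z - (x, 0)) := by
  unfold pairWeight
  rw [lintegral_const_mul _ (Measurable.ite (measurableSet_lt (by fun_prop) (by fun_prop))
    measurable_const measurable_const)]
  unfold coneDensity
  split_ifs with h
  · have h : 0 < z.2 := by simpa using h.1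
    have hball : ∀ y, (if dist x y < z.2 then (1 : ℝ≥0∞) else 0) =
        (Metric.ball x z.2).indicator (fun _ => 1) y := by
      intro y
      simp only [Set.indicator, Metric.mem_ball, dist_comm x y]
    simp_rw [hball]
    rw [lintegral_indicator Metric.isOpen_ball.measurableSet, setLIntegral_one, Prod.snd_sub,
      sub_zero,
      Measure.addHaar_ball_of_pos _ _ h, ← mul_assoc, ← ENNReal.ofReal_mul (by positivity),
      ← Real.rpow_natCast, ← Real.rpow_add h, mul_comm]
    congr 3
    ring
  · simp

theorem lintegral_pairWeight_mul {u : E × ℝ → ℝ} (hu : Measurable u) (p β M : ℝ) :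
    ∫⁻ x : E, ∫⁻ y : E, ∫⁻ z, pairWeight (β + Module.finrank ℝ E) M x y z *
        ‖u (x, 0) - u z‖ₑ ^ p =
      volume (Metric.ball (0 : E) 1) *
        ∫⁻ x : E, ∫⁻ z, ‖u (x, 0) - u ((x, 0) + z)‖ₑ ^ p ∂coneMeasure E β M := by
  have hW := measurable_pairWeight (E := E) (β + Module.finrank ℝ E) M
  have : (volume : Measure (E × ℝ)).IsAddHaarMeasure := Measure.prod.instIsAddHaarMeasure _ _
  rw [← lintegral_const_mul' _ _ measure_ball_lt_top.ne]
  refine lintegral_congr fun x => ?_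
  have hWx : Measurable fun a : E × (E × ℝ) =>
      pairWeight (β + Module.finrank ℝ E) M x a.1 a.2 :=
    hW.comp (by fun_prop : Measurable fun a : E × (E × ℝ) => (x, a.1, a.2))
  rw [lintegral_lintegral_swap (by fun_prop), lintegral_coneMeasure,
    ← lintegral_const_mul' _ _ measure_ball_lt_top.ne,
    ← lintegral_add_left_eq_self (μ := (volume : Measure (E × ℝ))) _ ((x, 0) : E × ℝ)]
  refine lintegral_congr fun z => ?_
  rw [lintegral_mul_const _ (by fun_prop), lintegral_pairWeight, add_sub_cancel_left, mul_assoc]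

/-- The short-range part of the Gagliardo seminorm of the trace. -/
theorem lintegral_trace_near_le {u : E × ℝ → ℝ} (hu : Measurable u) {p β M : ℝ} (hp : 1 ≤ p)
    (hβ : 0 ≤ β) :
    ∫⁻ x : E, ∫⁻ y : E, (if dist x y < M / 2 then
        ENNReal.ofReal (dist x y ^ (-(β - 1))) * ‖u (x, 0) - u (y, 0)‖ₑ ^ p else 0) ≤
      ENNReal.ofReal (2 ^ (p + β + Module.finrank ℝ E)) *
        ∫⁻ x : E, ∫⁻ z, ‖u (x, 0) - u ((x, 0) + z)‖ₑ ^ p ∂coneMeasure E β M := by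
  set n := Module.finrank ℝ E
  set ω := (volume (Metric.ball (0 : E) 1)).toReal
  have hω0 : 0 < ω := volume_ball_toReal_pos
  have hvω : volume (Metric.ball (0 : E) 1) = ENNReal.ofReal ω :=
    (ENNReal.ofReal_toReal measure_ball_lt_top.ne).symm
  set J := ∫⁻ x : E, ∫⁻ z, ‖u (x, 0) - u ((x, 0) + z)‖ₑ ^ p ∂coneMeasure E β M
  have hW := measurable_pairWeight (E := E) (β + n) M
  have hW1 : Measurable fun a : (E × E) × (E × ℝ) => pairWeight (β + n) M a.1.1 a.1.2 a.2 :=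
    hW.comp (by fun_prop : Measurable fun a : (E × E) × (E × ℝ) => (a.1.1, a.1.2, a.2))
  have hW2 : Measurable fun a : (E × E) × (E × ℝ) => pairWeight (β + n) M a.1.2 a.1.1 a.2 :=
    hW.comp (by fun_prop : Measurable fun a : (E × E) × (E × ℝ) => (a.1.2, a.1.1, a.2))
  let f : E → E → ℝ≥0∞ := fun x y =>
    ∫⁻ z, pairWeight (β + n) M x y z * ‖u (x, 0) - u z‖ₑ ^ p
  have hf : Measurable fun a : E × E => f a.1 a.2 := by fun_prop
  have hJ : ∫⁻ x : E, ∫⁻ y : E, f x y = ENNReal.ofReal ω * J := by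
    rw [← hvω]
    exact lintegral_pairWeight_mul hu p β M
  have hJ' : ∫⁻ x : E, ∫⁻ y : E, f y x = ENNReal.ofReal ω * J := by
    rw [← hJ, lintegral_lintegral_swap (by fun_prop)]
  set c := ENNReal.ofReal (2 ^ (p - 1 + β + n) * ω⁻¹) with hc
  calc _ ≤ ∫⁻ x : E, ∫⁻ y : E, c * (f x y + f y x) := by
        refine lintegral_mono fun x => lintegral_mono fun y => ?_
        split_ifs with h
        · rcases eq_or_ne x y with rfl | hxy
          · simp [show 0 < p by linarith]
          · refine (enorm_trace_sub_rpow_le_pairWeight hu hp (by positivity) (dist_pos.2 hxy)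
              h).trans ?_
            rw [lintegral_add_left]
            exact (hW1.comp (by fun_prop : Measurable fun z : E × ℝ => ((x, y), z))).mul
              (by fun_prop)
        · exact zero_le
    _ = c * (ENNReal.ofReal ω * J + ENNReal.ofReal ω * J) := by
        simp_rw [lintegral_const_mul' _ _ (show c ≠ ⊤ from ENNReal.ofReal_ne_top)]
        congr 1
        calc _ = ∫⁻ x : E, ((∫⁻ y : E, f x y) + ∫⁻ y : E, f y x) :=
              lintegral_congr fun x => lintegral_add_left (by fun_prop) _
          _ = _ := by rw [lintegral_add_left (by fun_prop), hJ, hJ']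
    _ = _ := by
        rw [← two_mul, ← mul_assoc, ← mul_assoc, hc, show (2 : ℝ≥0∞) = ENNReal.ofReal 2 by simp,
          ← ENNReal.ofReal_mul (by positivity), ← ENNReal.ofReal_mul (by positivity)]
        congr 2
        rw [show p + β + n = p - 1 + β + n + 1 by ring, Real.rpow_add_one two_ne_zero]
        field_simp

/-- The trace is bounded in `L^p` by the weighted trace difference and the `L^p` norm on the
stripe. -/
theorem lintegral_trace_rpow_le {u : E × ℝ → ℝ} (hu : Measurable u) {p s M : ℝ} (hp : 1 ≤ p)
    (hs : 0 ≤ s) (hM : 0 < M) :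
    ENNReal.ofReal (M ^ (1 - p * s)) * ∫⁻ x : E, ‖u (x, 0)‖ₑ ^ p ≤
      ENNReal.ofReal (2 ^ p * (1 + (volume (Metric.ball (0 : E) 1)).toReal⁻¹)) *
        ((∫⁻ x : E, ∫⁻ z, ‖u (x, 0) - u ((x, 0) + z)‖ₑ ^ p
            ∂coneMeasure E (Module.finrank ℝ E + p * s) M) +
          ENNReal.ofReal (M ^ (-(p * s))) *
            ∫⁻ x : E, ∫⁻ ζ in Set.Ioc 0 M, ‖u (x, ζ)‖ₑ ^ p) := by
  set n := Module.finrank ℝ E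
  set ω := (volume (Metric.ball (0 : E) 1)).toReal
  have hω0 : 0 < ω := volume_ball_toReal_pos
  set β : ℝ := n + p * s with hβ
  have hβ0 : 0 ≤ β := by positivity
  set J := ∫⁻ x : E, ∫⁻ z, ‖u (x, 0) - u ((x, 0) + z)‖ₑ ^ p ∂coneMeasure E β M with hJ
  set L := ∫⁻ x : E, ∫⁻ ζ in Set.Ioc 0 M, ‖u (x, ζ)‖ₑ ^ p with hL
  set G := ∫⁻ x : E, ‖u (x, 0)‖ₑ ^ p with hG
  set S : Set (E × ℝ) := Metric.ball 0 M ×ˢ Set.Ioo (M / 2) M with hS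
  have hSm : MeasurableSet S := Metric.isOpen_ball.measurableSet.prod measurableSet_Ioo
  have hvol : volume S = ENNReal.ofReal (ω * M ^ (n + 1) / 2) := by
    rw [hS, Measure.volume_eq_prod, Measure.prod_prod, volume_ball_eq_ofReal 0 hM,
      Real.volume_Ioo, ← ENNReal.ofReal_mul (by positivity)]
    congr 1
    ring
  have hone : ∀ z ∈ S, 1 ≤ ENNReal.ofReal (M ^ β) * coneDensity E β M z := by
    intro z hz
    have h0 : ‖z.1‖ < M := by simpa using hz.1
    have h1 : M / 2 < z.2 := hz.2.1
    have h2 : z.2 < M := hz.2.2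
    have hz0 : 0 < z.2 := by linarith
    unfold coneDensity
    rw [if_pos ⟨hz0, h2.le, by linarith⟩, ← ENNReal.ofReal_mul (by positivity),
      ENNReal.one_le_ofReal, Real.rpow_neg hz0.le, ← div_eq_mul_inv,
      one_le_div (by positivity)]
    exact Real.rpow_le_rpow hz0.le h2.le hβ0
  have hx : ∀ x : E, ‖u (x, 0)‖ₑ ^ p * volume S ≤ ENNReal.ofReal (2 ^ (p - 1)) *
      (ENNReal.ofReal (M ^ β) * (∫⁻ z, ‖u (x, 0) - u ((x, 0) + z)‖ₑ ^ p ∂coneMeasure E β M) +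
        ∫⁻ z in S, ‖u ((x, 0) + z)‖ₑ ^ p) := by
    intro x
    rw [← setLIntegral_const, lintegral_coneMeasure,
      ← lintegral_const_mul' _ _ ENNReal.ofReal_ne_top]
    calc _ ≤ ∫⁻ z in S, ENNReal.ofReal (2 ^ (p - 1)) * (ENNReal.ofReal (M ^ β) *
            (coneDensity E β M z * ‖u (x, 0) - u ((x, 0) + z)‖ₑ ^ p) +
              ‖u ((x, 0) + z)‖ₑ ^ p) := by
          refine setLIntegral_mono' hSm fun z hz => ?_
          refine (enorm_rpow_le_two_rpow_mul hp
            (show u (x, 0) = (u (x, 0) - u ((x, 0) + z)) + u ((x, 0) + z) by ring)).trans ?_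
          gcongr
          rw [← mul_assoc]
          exact le_mul_of_one_le_left' (hone z hz)
      _ ≤ _ := by
          rw [lintegral_const_mul' _ _ ENNReal.ofReal_ne_top, lintegral_add_right _ (by fun_prop)]
          gcongr
          exact Measure.restrict_le_self
  have hSL : ∫⁻ x : E, ∫⁻ z in S, ‖u ((x, 0) + z)‖ₑ ^ p ≤ ENNReal.ofReal (M ^ n * ω) * L := by
    rw [lintegral_lintegral_swap (by fun_prop)]
    have h1 : ∀ z : E × ℝ, ∫⁻ x : E, ‖u ((x, 0) + z)‖ₑ ^ p = ∫⁻ x : E, ‖u (x, z.2)‖ₑ ^ p := by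
      intro z
      rw [← lintegral_add_right_eq_self (fun x => ‖u (x, z.2)‖ₑ ^ p) z.1]
      refine lintegral_congr fun x => ?_
      rw [show ((x, 0) : E × ℝ) + z = (x + z.1, z.2) by ext <;> simp]
    simp_rw [h1]
    rw [hS, Measure.volume_eq_prod, ← Measure.prod_restrict, lintegral_prod _ (by fun_prop)]
    dsimp only
    rw [setLIntegral_const, volume_ball_eq_ofReal 0 hM, mul_comm, hL,
      lintegral_lintegral_swap (μ := (volume : Measure E)) (by fun_prop)]
    gcongr
    exact Set.Ioo_subset_Ioc_self.trans (Set.Ioc_subset_Ioc_left (by positivity))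
  have hmain : G * ENNReal.ofReal (ω * M ^ (n + 1) / 2) ≤ ENNReal.ofReal (2 ^ (p - 1)) *
      (ENNReal.ofReal (M ^ β) * J + ENNReal.ofReal (M ^ n * ω) * L) := by
    rw [← hvol, hG, ← lintegral_mul_const _ (by fun_prop)]
    refine (lintegral_mono hx).trans ?_
    rw [lintegral_const_mul' _ _ ENNReal.ofReal_ne_top, lintegral_add_right _ (by fun_prop),
      lintegral_const_mul' _ _ ENNReal.ofReal_ne_top]
    gcongr
  have hn1 : M ^ (n + 1) = M ^ (n : ℝ) * M := by rw [pow_succ, Real.rpow_natCast]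
  have hMn : M ^ (n : ℝ) ≠ 0 := by positivity
  have hMps : M ^ (p * s) ≠ 0 := by positivity
  set c := M ^ (1 - p * s) * (2 / (ω * M ^ (n + 1))) with hc
  have hc0 : 0 ≤ c := by positivity
  have e0 : M ^ (1 - p * s) = c * (ω * M ^ (n + 1) / 2) := by
    rw [hc]; field_simp
  have e1 : c * (2 ^ (p - 1) * M ^ β) = 2 ^ p * ω⁻¹ := by
    rw [hc, hβ, hn1, Real.rpow_sub hM, Real.rpow_one, Real.rpow_add hM, Real.rpow_sub two_pos,
      Real.rpow_one]
    field_simp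
  have e2 : c * (2 ^ (p - 1) * (M ^ n * ω)) = 2 ^ p * M ^ (-(p * s)) := by
    rw [hc, hn1, Real.rpow_sub hM, Real.rpow_one, Real.rpow_neg hM.le, Real.rpow_sub two_pos,
      Real.rpow_one, ← Real.rpow_natCast]
    field_simp
  clear_value c
  calc ENNReal.ofReal (M ^ (1 - p * s)) * G
      = ENNReal.ofReal c * (G * ENNReal.ofReal (ω * M ^ (n + 1) / 2)) := by
        rw [e0, ENNReal.ofReal_mul hc0]; ring
    _ ≤ ENNReal.ofReal c * (ENNReal.ofReal (2 ^ (p - 1)) *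
          (ENNReal.ofReal (M ^ β) * J + ENNReal.ofReal (M ^ n * ω) * L)) := by gcongr
    _ = ENNReal.ofReal (c * (2 ^ (p - 1) * M ^ β)) * J +
          ENNReal.ofReal (c * (2 ^ (p - 1) * (M ^ n * ω))) * L := by
        rw [ENNReal.ofReal_mul (p := c) (q := 2 ^ (p - 1) * M ^ β) hc0,
          ENNReal.ofReal_mul (p := 2 ^ (p - 1)) (q := M ^ β) (by positivity),
          ENNReal.ofReal_mul (p := c) (q := 2 ^ (p - 1) * (M ^ n * ω)) hc0,
          ENNReal.ofReal_mul (p := 2 ^ (p - 1)) (q := M ^ n * ω) (by positivity)]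
        ring
    _ = ENNReal.ofReal (2 ^ p * ω⁻¹) * J +
          ENNReal.ofReal (2 ^ p) * (ENNReal.ofReal (M ^ (-(p * s))) * L) := by
        rw [e1, e2, ENNReal.ofReal_mul (p := 2 ^ p) (q := M ^ (-(p * s))) (by positivity),
          mul_assoc]
    _ ≤ _ := by
        rw [mul_add]
        gcongr
        · linarith
        · refine le_mul_of_one_le_right (by positivity) ?_
          have : 0 < ω⁻¹ := by positivity
          linarith

theorem exists_lintegral_norm_rpow_compl_ball_le {γ : ℝ} (hγ : (Module.finrank ℝ E : ℝ) < γ) :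
    ∃ C : ℝ, 0 ≤ C ∧ ∀ r : ℝ, 0 < r →
      ∫⁻ h : E, (if ‖h‖ < r then 0 else ENNReal.ofReal (‖h‖ ^ (-γ))) ≤
        ENNReal.ofReal (C * r ^ (Module.finrank ℝ E - γ)) := by
  have hγ0 : 0 < γ := lt_of_le_of_lt (Nat.cast_nonneg _) hγ
  set I := ∫⁻ h : E, (if ‖h‖ < 1 then 0 else ENNReal.ofReal (‖h‖ ^ (-γ))) with hI
  have hfin : I < ⊤ := by
    refine lt_of_le_of_lt ?_ (ENNReal.mul_lt_top (a := ENNReal.ofReal (2 ^ γ))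
      ENNReal.ofReal_lt_top (finite_integral_one_add_norm (E := E) (μ := volume) hγ))
    rw [← lintegral_const_mul' _ _ ENNReal.ofReal_ne_top]
    refine lintegral_mono fun h => ?_
    beta_reduce
    split_ifs with h1
    · exact zero_le
    · push Not at h1
      have h0 : 0 < ‖h‖ := by linarith
      rw [← ENNReal.ofReal_mul (by positivity)]
      apply ENNReal.ofReal_le_ofReal
      have h2 : (2 * ‖h‖) ^ (-γ) ≤ (1 + ‖h‖) ^ (-γ) :=
        Real.rpow_le_rpow_of_nonpos (by positivity) (by linarith) (by linarith)
      have h3 : ‖h‖ ^ (-γ) = 2 ^ γ * (2 * ‖h‖) ^ (-γ) := by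
        rw [Real.mul_rpow two_pos.le h0.le, ← mul_assoc, ← Real.rpow_add two_pos]
        simp
      rw [h3]
      gcongr
  refine ⟨I.toReal, ENNReal.toReal_nonneg, fun r hr => le_of_eq ?_⟩
  have h := lintegral_comp_smul_addHaar (volume : Measure E)
    (fun h => if ‖h‖ < r then 0 else ENNReal.ofReal (‖h‖ ^ (-γ))) hr.ne'
  have h1 : ∫⁻ h : E, (if ‖r • h‖ < r then 0 else ENNReal.ofReal (‖r • h‖ ^ (-γ))) =
      ENNReal.ofReal (r ^ (-γ)) * I := by
    rw [hI, ← lintegral_const_mul' _ _ ENNReal.ofReal_ne_top]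
    refine lintegral_congr fun h => ?_
    simp only [norm_smul, Real.norm_eq_abs, abs_of_pos hr, mul_lt_iff_lt_one_right hr]
    split_ifs
    · simp
    · rw [Real.mul_rpow hr.le (norm_nonneg h), ENNReal.ofReal_mul (by positivity)]
  rw [h1, abs_of_pos (by positivity)] at h
  calc _ = ENNReal.ofReal (r ^ Module.finrank ℝ E) * (ENNReal.ofReal (r ^ Module.finrank ℝ E)⁻¹ *
        ∫⁻ h : E, (if ‖h‖ < r then 0 else ENNReal.ofReal (‖h‖ ^ (-γ)))) := by
        rw [← mul_assoc, ← ENNReal.ofReal_mul (by positivity), mul_inv_cancel₀ (by positivity),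
          ENNReal.ofReal_one, one_mul]
    _ = _ := by
        rw [← h, ENNReal.ofReal_mul ENNReal.toReal_nonneg, ENNReal.ofReal_toReal hfin.ne,
          ← mul_assoc, ← ENNReal.ofReal_mul (by positivity), sub_eq_add_neg, Real.rpow_add hr,
          Real.rpow_natCast, mul_comm]

/-- The long-range part of the Gagliardo seminorm of the trace. -/
theorem lintegral_trace_far_le {g : E → ℝ} (hg : Measurable g) {p γ r C : ℝ} (hp : 1 ≤ p)
    (hC : ∫⁻ h : E, (if ‖h‖ < r then 0 else ENNReal.ofReal (‖h‖ ^ (-γ))) ≤ ENNReal.ofReal C) :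
    ∫⁻ x : E, ∫⁻ y : E, (if dist x y < r then 0 else
        ENNReal.ofReal (dist x y ^ (-γ)) * ‖g x - g y‖ₑ ^ p) ≤
      ENNReal.ofReal (2 ^ p * C) * ∫⁻ x : E, ‖g x‖ₑ ^ p := by
  let k : E → E → ℝ≥0∞ := fun x y =>
    if dist x y < r then 0 else ENNReal.ofReal (dist x y ^ (-γ))
  have hk : Measurable fun a : E × E => k a.1 a.2 :=
    Measurable.ite (measurableSet_lt (by fun_prop) (by fun_prop)) measurable_const (by fun_prop)
  have hkx : ∀ x, ∫⁻ y, k x y ≤ ENNReal.ofReal C := by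
    intro x
    rw [← lintegral_add_left_eq_self _ x]
    simpa only [k, dist_self_add_right] using hC
  have h1 : ∫⁻ x : E, ∫⁻ y : E, k x y * ‖g x‖ₑ ^ p ≤
      ENNReal.ofReal C * ∫⁻ x : E, ‖g x‖ₑ ^ p := by
    rw [← lintegral_const_mul' _ _ ENNReal.ofReal_ne_top]
    refine lintegral_mono fun x => ?_
    rw [lintegral_mul_const _ (by fun_prop)]
    gcongr
    exact hkx x
  have h2 : ∫⁻ x : E, ∫⁻ y : E, k x y * ‖g y‖ₑ ^ p ≤
      ENNReal.ofReal C * ∫⁻ x : E, ‖g x‖ₑ ^ p := by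
    rw [lintegral_lintegral_swap (by fun_prop)]
    refine le_trans (le_of_eq ?_) h1
    simp only [k, dist_comm]
  calc _ ≤ ∫⁻ x : E, ∫⁻ y : E, ENNReal.ofReal (2 ^ (p - 1)) *
        (k x y * ‖g x‖ₑ ^ p + k x y * ‖g y‖ₑ ^ p) := by
        refine lintegral_mono fun x => lintegral_mono fun y => ?_
        simp only [k]
        split_ifs
        · simp
        · have h := enorm_rpow_le_two_rpow_mul hp (sub_eq_add_neg (g x) (g y))
          rw [enorm_neg] at h
          rw [← mul_add, mul_left_comm]
          gcongr
    _ = ENNReal.ofReal (2 ^ (p - 1)) * ((∫⁻ x : E, ∫⁻ y : E, k x y * ‖g x‖ₑ ^ p) +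
          ∫⁻ x : E, ∫⁻ y : E, k x y * ‖g y‖ₑ ^ p) := by
        simp_rw [lintegral_const_mul' _ _ ENNReal.ofReal_ne_top]
        rw [← lintegral_add_left (by fun_prop)]
        congr 1
        exact lintegral_congr fun x => lintegral_add_left (by fun_prop) _
    _ ≤ ENNReal.ofReal (2 ^ (p - 1)) * (ENNReal.ofReal C * (∫⁻ x : E, ‖g x‖ₑ ^ p) +
          ENNReal.ofReal C * ∫⁻ x : E, ‖g x‖ₑ ^ p) := by gcongr
    _ = _ := by
        rw [← two_mul, ENNReal.ofReal_mul (by positivity), show (2 : ℝ) ^ p = 2 ^ (p - 1) * 2 by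
          rw [← Real.rpow_add_one two_ne_zero, sub_add_cancel], ENNReal.ofReal_mul (by positivity)]
        simp only [ENNReal.ofReal_ofNat]
        ring

/-- The Gagliardo seminorm of the trace of a continuous function is bounded by the `L^p` norm and
the localized nonlocal seminorm on the stripe `E × (0, M]`. -/
theorem exists_lintegral_trace_sub_le {p s : ℝ} (hp : 1 ≤ p) (hs0 : 0 < s) (hs1 : s ≤ 1)
    (hsp : 1 < s * p) :
    ∃ C : ℝ, 0 < C ∧ ∀ M : ℝ, 0 < M → ∀ ϑ : ℝ, 0 < ϑ → ϑ ≤ 1 → ∀ u : E × ℝ → ℝ, Continuous u →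
      ∫⁻ x : E, ∫⁻ y : E, ENNReal.ofReal (dist x y ^ (-(Module.finrank ℝ E + p * s - 1))) *
          ‖u (x, 0) - u (y, 0)‖ₑ ^ p ≤
        ENNReal.ofReal C * (ENNReal.ofReal (M ^ (-(p * s))) *
            (∫⁻ x : E, ∫⁻ ζ in Set.Ioc 0 M, ‖u (x, ζ)‖ₑ ^ p) +
          ENNReal.ofReal (ϑ ^ (p * s - p)) *
            nonlocalSemi u p (Module.finrank ℝ E + p * s + 1) M ϑ) := by
  have hb0 : 0 < s - 1 / p := by
    rw [sub_pos, div_lt_iff₀ (by linarith)]; exact hsp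
  set n := Module.finrank ℝ E
  obtain ⟨C₀, hC₀, hfar⟩ := exists_lintegral_norm_rpow_compl_ball_le (E := E)
    (γ := n + p * s - 1) (by linarith [mul_comm p s])
  set c₁ : ℝ := 2 ^ (p + (n + p * s) + n)
  set c₂ : ℝ := 2 ^ p * (C₀ * 2 ^ (p * s - 1)) with hc₂
  set c₃ : ℝ := 2 ^ p * (1 + (volume (Metric.ball (0 : E) 1)).toReal⁻¹)
  set c₄ : ℝ := 5 ^ (1 + p + n) * (s - 1 / p) ^ (-p)
  have hc₁0 : 0 < c₁ := by positivity
  have hc₂0 : 0 ≤ c₂ := by positivity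
  have hc₃0 : 0 ≤ c₃ := by positivity
  have hc₄0 : 0 < c₄ := by positivity
  refine ⟨(c₁ + c₂ * c₃) * c₄ + c₂ * c₃, by positivity, ?_⟩
  intro M hM ϑ hϑ0 hϑ1 u hu
  have hum : Measurable u := hu.measurable
  set A := ENNReal.ofReal (M ^ (-(p * s))) * ∫⁻ x : E, ∫⁻ ζ in Set.Ioc 0 M, ‖u (x, ζ)‖ₑ ^ p
  set B := ENNReal.ofReal (ϑ ^ (p * s - p)) * nonlocalSemi u p (n + p * s + 1) M ϑ
  set J := ∫⁻ x : E, ∫⁻ z, ‖u (x, 0) - u ((x, 0) + z)‖ₑ ^ p ∂coneMeasure E (n + p * s) M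
  have hJ : J ≤ ENNReal.ofReal c₄ * B :=
    lintegral_trace_sub_coneMeasure_le_nonlocalSemi hu hp hs1 hsp hϑ0 hϑ1
  have hnear := lintegral_trace_near_le hum (M := M) (β := n + p * s) hp (by positivity)
  have hfar' : ∫⁻ x : E, ∫⁻ y : E, (if dist x y < M / 2 then 0 else
        ENNReal.ofReal (dist x y ^ (-(n + p * s - 1))) * ‖u (x, 0) - u (y, 0)‖ₑ ^ p) ≤
      ENNReal.ofReal c₂ * (ENNReal.ofReal c₃ * (J + A)) := by
    refine (lintegral_trace_far_le (g := fun x : E => u (x, 0)) (by fun_prop) hp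
      (hfar (M / 2) (by positivity))).trans ?_
    have hc : 2 ^ p * (C₀ * (M / 2) ^ ((n : ℝ) - (n + p * s - 1))) = c₂ * M ^ (1 - p * s) := by
      rw [hc₂, show (n : ℝ) - (n + p * s - 1) = 1 - p * s by ring, Real.div_rpow hM.le two_pos.le,
        show p * s - 1 = -(1 - p * s) by ring, Real.rpow_neg two_pos.le]
      ring
    rw [hc, ENNReal.ofReal_mul hc₂0, mul_assoc]
    refine mul_le_mul_right ?_ _
    exact lintegral_trace_rpow_le hum hp hs0.le hM
  calc _ = (∫⁻ x : E, ∫⁻ y : E, (if dist x y < M / 2 then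
          ENNReal.ofReal (dist x y ^ (-(n + p * s - 1))) * ‖u (x, 0) - u (y, 0)‖ₑ ^ p else 0)) +
        ∫⁻ x : E, ∫⁻ y : E, (if dist x y < M / 2 then 0 else
          ENNReal.ofReal (dist x y ^ (-(n + p * s - 1))) * ‖u (x, 0) - u (y, 0)‖ₑ ^ p) := by
        have hmeas : Measurable fun q : E × E => if dist q.1 q.2 < M / 2 then
            ENNReal.ofReal (dist q.1 q.2 ^ (-(n + p * s - 1))) *
              ‖u (q.1, 0) - u (q.2, 0)‖ₑ ^ p else 0 :=
          Measurable.ite (measurableSet_lt (by fun_prop) (by fun_prop)) (by fun_prop)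
            measurable_const
        rw [← lintegral_add_left hmeas.lintegral_prod_right']
        refine lintegral_congr fun x => ?_
        refine Eq.trans ?_ (lintegral_add_left (hmeas.comp measurable_prodMk_left) _)
        refine lintegral_congr fun y => ?_
        simp only [Function.comp_apply]
        split_ifs <;> simp
    _ ≤ ENNReal.ofReal c₁ * (ENNReal.ofReal c₄ * B) +
        ENNReal.ofReal c₂ * (ENNReal.ofReal c₃ * (ENNReal.ofReal c₄ * B + A)) := by
        refine add_le_add (hnear.trans ?_) (hfar'.trans ?_) <;> gcongr
    _ = ENNReal.ofReal ((c₁ + c₂ * c₃) * c₄) * B + ENNReal.ofReal (c₂ * c₃) * A := by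
        rw [ENNReal.ofReal_mul (p := c₁ + c₂ * c₃) (q := c₄) (by positivity),
          ENNReal.ofReal_add hc₁0.le (by positivity), ENNReal.ofReal_mul hc₂0]
        ring
    _ ≤ _ := by
        rw [mul_add, add_comm]
        gcongr
        · exact le_add_of_nonneg_left (by positivity)
        · exact le_add_of_nonneg_right (by positivity)

end TraceInequality

/-- Gagliardo `W^{s-1/p,p}(ℝ^{d-1})` seminorm bound for the trace on
`Γ = ℝ^{d-1} × {0}` of a Lipschitz function on the stripe `ℝ^{d-1} × (0,M]`,
with a constant independent of `M` and `ϑ`. -/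
theorem stmt_13 (d : ℕ) (hd : 2 ≤ d) (p s : ℝ) (hp : 1 ≤ p) (hs0 : 0 < s)
    (hs1 : s ≤ 1) (hsp : 1 < s * p) :
    ∃ C : ℝ, 0 < C ∧ ∀ (M : ℝ), 0 < M → ∀ (ϑ : ℝ), 0 < ϑ → ϑ ≤ 1 →
      ∀ (u : EuclideanSpace ℝ (Fin (d - 1)) → ℝ → ℝ) (K : NNReal),
        LipschitzOnWith K (fun q : EuclideanSpace ℝ (Fin (d - 1)) × ℝ => u q.1 q.2)
          {q : EuclideanSpace ℝ (Fin (d - 1)) × ℝ | q.2 ∈ Set.Icc 0 M} →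
        stripeSemi d (Set.Ioc 0 M) ϑ p s u ≠ ⊤ →
        (∫⁻ x' : EuclideanSpace ℝ (Fin (d - 1)),
            ∫⁻ y' : EuclideanSpace ℝ (Fin (d - 1)),
              ENNReal.ofReal
                (|u x' 0 - u y' 0| ^ p / dist x' y' ^ ((d : ℝ) + p * s - 2))) ≤
          ENNReal.ofReal C *
            (ENNReal.ofReal (M ^ (-(p * s))) * stripeLp d (Set.Ioc 0 M) p u +
              ENNReal.ofReal (ϑ ^ (p * s - p)) *
                stripeSemi d (Set.Ioc 0 M) ϑ p s u) := by
  obtain ⟨C, hC, hmain⟩ := exists_lintegral_trace_sub_le (E := EuclideanSpace ℝ (Fin (d - 1)))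
    hp hs0 hs1 hsp
  refine ⟨C, hC, fun M hM ϑ hϑ0 hϑ1 u K hu _ => ?_⟩
  have hp0 : 0 ≤ p := by linarith
  let v : EuclideanSpace ℝ (Fin (d - 1)) × ℝ → ℝ := fun q => u q.1 (max 0 (min M q.2))
  have hv : Continuous v := by
    refine hu.continuousOn.comp_continuous
      (f := fun q : EuclideanSpace ℝ (Fin (d - 1)) × ℝ => (q.1, max 0 (min M q.2)))
      (by fun_prop) fun q => ?_
    exact ⟨le_max_left _ _, max_le hM.le (min_le_left _ _)⟩
  have hv0 : ∀ x, v (x, 0) = u x 0 := fun x => by simp [v, hM.le]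
  have hvu : ∀ x, ∀ t ∈ Set.Ioc 0 M, v (x, t) = u x t := fun x t ht => by
    simp [v, ht.1.le, ht.2]
  have hn : ((Module.finrank ℝ (EuclideanSpace ℝ (Fin (d - 1))) : ℕ) : ℝ) = d - 1 := by
    rw [finrank_euclideanSpace_fin, Nat.cast_sub (by omega), Nat.cast_one]
  have hLp : ∫⁻ x, ∫⁻ ζ in Set.Ioc 0 M, ‖v (x, ζ)‖ₑ ^ p = stripeLp d (Set.Ioc 0 M) p u := by
    refine lintegral_congr fun x => setLIntegral_congr_fun measurableSet_Ioc fun ζ hζ => ?_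
    rw [hvu x ζ hζ, ofReal_abs_rpow_eq_enorm_rpow _ hp0]
  have hSemi : nonlocalSemi v p (d + p * s) M ϑ = stripeSemi d (Set.Ioc 0 M) ϑ p s u := by
    refine lintegral_congr fun x => setLIntegral_congr_fun measurableSet_Ioc fun ζ hζ => ?_
    refine lintegral_congr fun y =>
      setLIntegral_congr_fun (measurableSet_ball_section M ϑ ζ x y) fun t ht => ?_
    rw [hvu x ζ hζ, hvu y t ht.1]
  have h := hmain M hM ϑ hϑ0 hϑ1 v hv
  rw [hn, hLp, show (d : ℝ) - 1 + p * s + 1 = d + p * s by ring, hSemi] at h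
  refine le_trans (le_of_eq ?_) h
  refine lintegral_congr fun x => lintegral_congr fun y => ?_
  rw [hv0, hv0, ← ofReal_abs_rpow_eq_enorm_rpow _ hp0, ← ENNReal.ofReal_mul (by positivity),
    Real.rpow_neg dist_nonneg, inv_mul_eq_div,
    show (d : ℝ) - 1 + p * s - 1 = d + p * s - 2 by ring]
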